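/- Let k ≥ 2 be an integer and ϱ ∈ ℍ. Then: (i) the Petersson Poincaré series η_{k,ϱ} is holomorphic on ℍ ∖ SL₂(ℤ)ϱ; (ii) if ϱ has trivial stabilizer in PSL₂(ℤ) (that is, γϱ = ϱ for γ ∈ SL₂(ℤ) implies γ = ±I), then the function z ↦ η_{k,ϱ}(z) − ((z−ϱ)(z−conj(ϱ))/(ϱ−conj(ϱ)))^{−k} extends to a holomorphic function on a neighborhood of ϱ; (iii) η_{k,ϱ}(z) → 0 as Im(z) → ∞, uniformly in Re(z). (In other words, η_{k,ϱ} is a meromorphic modular form of weight 2k for SL₂(ℤ) vanishing at the cusp, with residue divisor [ϱ].) -/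

import Mathlib

open Complex ComplexConjugate Metric Set MeasureTheory

noncomputable section

/-- The upper half-plane, as a subset of `ℂ`. -/
def UH : Set ℂ := {z | 0 < z.im}

abbrev SL2Z := Matrix.SpecialLinearGroup (Fin 2) ℤ

/-- The Möbius action `γz = (az+b)/(cz+d)` of `SL₂(ℤ)` on the upper half-plane
(written as a map on `ℂ`). -/
def moeb (γ : SL2Z) (z : ℂ) : ℂ :=
  ((γ.1 0 0 : ℂ) * z + (γ.1 0 1 : ℂ)) / ((γ.1 1 0 : ℂ) * z + (γ.1 1 1 : ℂ))

/-- The `SL₂(ℤ)`-orbit of a point `ϱ`. -/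
def orbit (ϱ : ℂ) : Set ℂ := {z | ∃ γ : SL2Z, z = moeb γ ϱ}

/-- The elliptic pole term `((z−ϱ)(z−conj ϱ)/(ϱ−conj ϱ))^(−k)`. -/
def polePart (k : ℕ) (ϱ z : ℂ) : ℂ :=
  ((z - ϱ) * (z - conj ϱ) / (ϱ - conj ϱ)) ^ (-(k : ℤ))

/-- A single term of the Petersson Poincaré series:
`((γz − ϱ)(γz − conj ϱ)/(ϱ − conj ϱ))^(−k) · (cz + d)^(−2k)`. -/
def etaTerm (k : ℕ) (ϱ z : ℂ) (γ : SL2Z) : ℂ :=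
  ((moeb γ z - ϱ) * (moeb γ z - conj ϱ) / (ϱ - conj ϱ)) ^ (-(k : ℤ)) *
    ((γ.1 1 0 : ℂ) * z + (γ.1 1 1 : ℂ)) ^ (-(2 * k : ℤ))

/-- The Petersson Poincaré series `η_{k,ϱ}(z)`. -/
def etaP (k : ℕ) (ϱ z : ℂ) : ℂ := (1 / 2 : ℂ) * ∑' γ : SL2Z, etaTerm k ϱ z γ

/-!
Clearing denominators, the term of `γ` is `((ϱ - ϱ̄) / (J(ϱ) J(ϱ̄))) ^ k` with
`J(w) = (cz + d)(γz - w) = (az + b) - w (cz + d)`, and `|J(ϱ̄)|² = |J(ϱ)|² + 4 Im ϱ Im z`. Both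
`cz + d` and `az + b` are linear combinations of `J(ϱ)` and `J(ϱ̄)`, so `|J(ϱ̄)| ≥ C Im z` on `ℍ`,
and `|J(ϱ̄)| ≥ m ‖γ‖` for `z` in a vertical strip away from the real line. As soon as
`|J(ϱ̄)|² ≥ 8 Im ϱ Im z` the two factors are comparable and the term is `O(‖γ‖ ^ (-2k))`. Three
entries determine a matrix of `SL₂(ℤ)`, so these bounds are summable when `2k > 3`. On a compact
set they hold for all but finitely many `γ`, which gives local uniform convergence; for large
`Im z` they hold for every `γ`, which gives the limit at the cusp by dominated convergence and
periodicity.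
-/

open Filter Topology

attribute [local instance] Matrix.normedAddCommGroup

lemma summable_inv_norm_pow_int {ι : Type*} [Fintype ι] {n : ℕ} (hn : Fintype.card ι < n) :
    Summable fun x : ι → ℤ ↦ ‖x‖⁻¹ ^ n := by
  let L := Submodule.span ℤ (range (Pi.basisFun ℝ ι))
  have hL : Module.finrank ℤ L = Fintype.card ι := by
    rw [ZLattice.rank ℝ L, Module.finrank_fintype_fun_eq_card]
  have mem (x : ι → ℤ) : (fun i ↦ (x i : ℝ)) ∈ L :=
    (Pi.basisFun ℝ ι).mem_span_iff_repr_mem ℤ _ |>.2 fun i ↦ ⟨x i, by simp⟩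
  have inj : Function.Injective fun x : ι → ℤ ↦ (⟨_, mem x⟩ : L) := fun x y h ↦ by
    simpa [funext_iff] using h
  refine ((ZLattice.summable_norm_pow_inv L n (hL ▸ hn)).comp_injective inj).congr fun x ↦ ?_
  have hx (i : ι) : ‖(x i : ℝ)‖₊ = ‖x i‖₊ := NNReal.eq (Int.norm_cast_real _)
  simp [Pi.norm_def, hx]

lemma SL2Z_det (γ : SL2Z) : γ.1 0 0 * γ.1 1 1 - γ.1 0 1 * γ.1 1 0 = 1 := by
  rw [← Matrix.det_fin_two, γ.2]

/-- Three entries of `γ` which determine it: the bottom row `(c, d)` together with `b` if `c = 0`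
and `a` otherwise, the fourth entry being recovered from `ad - bc = 1`. -/
def determiningEntries (γ : SL2Z) : Fin 3 → ℤ :=
  ![γ.1 1 0, γ.1 1 1, if γ.1 1 0 = 0 then γ.1 0 1 else γ.1 0 0]

lemma determiningEntries_injective : Function.Injective determiningEntries := by
  intro γ δ h
  have hγ := SL2Z_det γ
  have hδ := SL2Z_det δ
  have hc : γ.1 1 0 = δ.1 1 0 := congrFun h 0
  have hd : γ.1 1 1 = δ.1 1 1 := congrFun h 1
  have h_ite : (if γ.1 1 0 = 0 then γ.1 0 1 else γ.1 0 0) =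
      if δ.1 1 0 = 0 then δ.1 0 1 else δ.1 0 0 := congrFun h 2
  rw [← hc] at h_ite hδ
  rw [← hd] at hδ
  have h_top : γ.1 0 0 = δ.1 0 0 ∧ γ.1 0 1 = δ.1 0 1 := by
    split_ifs at h_ite with hc0
    · have hd0 : γ.1 1 1 ≠ 0 := fun hd0 ↦ by simp [hc0, hd0] at hγ
      exact ⟨mul_right_cancel₀ hd0 (by linear_combination hγ - hδ + γ.1 1 0 * h_ite), h_ite⟩
    · exact ⟨h_ite, mul_right_cancel₀ hc0 (by linear_combination hδ - hγ + γ.1 1 1 * h_ite)⟩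
  ext i j
  fin_cases i <;> fin_cases j
  exacts [h_top.1, h_top.2, hc, hd]

lemma determiningEntries_ne_zero (γ : SL2Z) : determiningEntries γ ≠ 0 := fun h ↦ by
  have hc : γ.1 1 0 = 0 := congrFun h 0
  have hd : γ.1 1 1 = 0 := congrFun h 1
  simpa [hc, hd] using SL2Z_det γ

lemma norm_determiningEntries_le (γ : SL2Z) : ‖determiningEntries γ‖ ≤ ‖γ.1‖ := by
  have entry_le (i j : Fin 2) : ‖γ.1 i j‖ ≤ ‖γ.1‖ := Matrix.norm_entry_le_entrywise_sup_norm _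
  rw [pi_norm_le_iff_of_nonneg (norm_nonneg _)]
  intro i
  fin_cases i
  · exact entry_le 1 0
  · exact entry_le 1 1
  · change ‖if γ.1 1 0 = 0 then γ.1 0 1 else γ.1 0 0‖ ≤ ‖γ.1‖
    split_ifs
    exacts [entry_le 0 1, entry_le 0 0]

lemma SL2Z_norm_pos (γ : SL2Z) : 0 < ‖γ.1‖ :=
  (norm_pos_iff.2 (determiningEntries_ne_zero γ)).trans_le (norm_determiningEntries_le γ)

lemma summable_SL2Z_inv_norm_pow {n : ℕ} (hn : 3 < n) : Summable fun γ : SL2Z ↦ ‖γ.1‖⁻¹ ^ n := by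
  refine .of_nonneg_of_le (fun γ ↦ by positivity) (fun γ ↦ ?_)
    ((summable_inv_norm_pow_int (by simpa using hn)).comp_injective determiningEntries_injective)
  have := norm_pos_iff.2 (determiningEntries_ne_zero γ)
  dsimp only [Function.comp_apply]
  gcongr
  exact norm_determiningEntries_le γ

lemma tendsto_SL2Z_norm_cofinite_atTop : Tendsto (fun γ : SL2Z ↦ ‖γ.1‖) cofinite atTop := by
  have : Tendsto (norm : (Fin 2 → Fin 2 → ℤ) → ℝ) cofinite atTop := by
    rw [← cocompact_eq_cofinite]
    exact tendsto_norm_cocompact_atTop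
  exact this.comp Subtype.val_injective.tendsto_cofinite

lemma isOpen_UH : IsOpen UH := isOpen_lt continuous_const continuous_im

/-- The linear form `x₀ z + x₁` of an integer row `x`: for the two rows of `γ` it is the numerator
and the denominator of `γz`. -/
def rowForm (x : Fin 2 → ℤ) (z : ℂ) : ℂ := x 0 * z + x 1

lemma differentiable_rowForm (x : Fin 2 → ℤ) : Differentiable ℂ (rowForm x) := by
  unfold rowForm
  fun_prop

lemma rowForm_ne_zero {x : Fin 2 → ℤ} (hx : x ≠ 0) {z : ℂ} (hz : z ∈ UH) : rowForm x z ≠ 0 :=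
  norm_pos_iff.1 <| (mul_pos (EisensteinSeries.r_pos ⟨z, hz⟩) (norm_pos_iff.2 hx)).trans_le
    (EisensteinSeries.r_mul_max_le ⟨z, hz⟩ hx)

lemma im_le_norm_rowForm {x : Fin 2 → ℤ} (hx : x 0 ≠ 0) {z : ℂ} (hz : z ∈ UH) :
    z.im ≤ ‖rowForm x z‖ := by
  have hx' : (1 : ℝ) ≤ |(x 0 : ℝ)| := mod_cast Int.one_le_abs hx
  calc z.im ≤ |(x 0 : ℝ)| * z.im := le_mul_of_one_le_left (le_of_lt hz) hx'
    _ = |(rowForm x z).im| := by simp [rowForm, abs_mul, abs_of_pos (show 0 < z.im from hz)]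
    _ ≤ ‖rowForm x z‖ := abs_im_le_norm _

lemma moeb_eq_rowForm_div (γ : SL2Z) (z : ℂ) :
    moeb γ z = rowForm (γ.1 0) z / rowForm (γ.1 1) z :=
  rfl

lemma etaTerm_eq_mul_rowForm_zpow (k : ℕ) (ϱ z : ℂ) (γ : SL2Z) :
    etaTerm k ϱ z γ = ((moeb γ z - ϱ) * (moeb γ z - conj ϱ) / (ϱ - conj ϱ)) ^ (-(k : ℤ)) *
      rowForm (γ.1 1) z ^ (-(2 * k : ℤ)) :=
  rfl

/-- The difference `γz - w` cleared of its denominator: `(az + b) - w (cz + d)`. -/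
def crossForm (γ : SL2Z) (w z : ℂ) : ℂ := rowForm (γ.1 0) z - w * rowForm (γ.1 1) z

lemma differentiable_crossForm (γ : SL2Z) (w : ℂ) : Differentiable ℂ (crossForm γ w) :=
  (differentiable_rowForm _).sub ((differentiable_rowForm _).const_mul w)

lemma moeb_sub_eq_crossForm_div (γ : SL2Z) (w : ℂ) {z : ℂ} (hz : z ∈ UH) :
    moeb γ z - w = crossForm γ w z / rowForm (γ.1 1) z := by
  rw [moeb_eq_rowForm_div, crossForm, sub_div,
    mul_div_cancel_right₀ _ (rowForm_ne_zero (γ.row_ne_zero 1) hz)]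

lemma crossForm_eq_zero_iff {γ : SL2Z} {w z : ℂ} (hz : z ∈ UH) :
    crossForm γ w z = 0 ↔ moeb γ z = w := by
  rw [← sub_eq_zero (b := w), moeb_sub_eq_crossForm_div γ w hz,
    div_eq_zero_iff, or_iff_left (rowForm_ne_zero (γ.row_ne_zero 1) hz)]

lemma norm_crossForm_conj_sq (γ : SL2Z) (ϱ z : ℂ) :
    ‖crossForm γ (conj ϱ) z‖ ^ 2 = ‖crossForm γ ϱ z‖ ^ 2 + 4 * ϱ.im * z.im := by
  have hdet : (γ.1 0 0 * γ.1 1 1 - γ.1 0 1 * γ.1 1 0 : ℝ) = 1 := mod_cast SL2Z_det γ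
  simp only [← normSq_eq_norm_sq, normSq_apply, crossForm, rowForm, sub_re, sub_im, add_re, add_im,
    mul_re, mul_im, intCast_re, intCast_im, conj_re, conj_im]
  linear_combination 4 * ϱ.im * z.im * hdet

lemma norm_sub_conj {ϱ : ℂ} (hϱ : ϱ ∈ UH) : ‖ϱ - conj ϱ‖ = 2 * ϱ.im := by
  simp [sub_conj, abs_of_pos (show 0 < ϱ.im from hϱ)]

lemma im_mul_norm_rowForm_one_le {ϱ z : ℂ} (hϱ : ϱ ∈ UH) (hz : z ∈ UH) (γ : SL2Z) :
    ϱ.im * ‖rowForm (γ.1 1) z‖ ≤ ‖crossForm γ (conj ϱ) z‖ := by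
  have hϱz : 0 < ϱ.im * z.im := mul_pos hϱ hz
  have hle : ‖crossForm γ ϱ z‖ ≤ ‖crossForm γ (conj ϱ) z‖ :=
    le_of_sq_le_sq (by linarith [norm_crossForm_conj_sq γ ϱ z]) (norm_nonneg _)
  have heq : (ϱ - conj ϱ) * rowForm (γ.1 1) z = crossForm γ (conj ϱ) z - crossForm γ ϱ z := by
    unfold crossForm; ring
  have htri := norm_sub_le (crossForm γ (conj ϱ) z) (crossForm γ ϱ z)
  rw [← heq, norm_mul, norm_sub_conj hϱ] at htri
  linarith

lemma exists_mul_norm_rowForm_le {ϱ : ℂ} (hϱ : ϱ ∈ UH) :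
    ∃ c > 0, ∀ z ∈ UH, ∀ (γ : SL2Z) (i : Fin 2),
      c * ‖rowForm (γ.1 i) z‖ ≤ ‖crossForm γ (conj ϱ) z‖ := by
  have hϱ' : 0 < ϱ.im := hϱ
  refine ⟨ϱ.im / (1 + ϱ.im + ‖ϱ‖), by positivity, fun z hz γ i ↦ ?_⟩
  have hv := im_mul_norm_rowForm_one_le hϱ hz γ
  set D := ‖crossForm γ (conj ϱ) z‖
  have hu : ‖rowForm (γ.1 0) z‖ ≤ D + ‖ϱ‖ * ‖rowForm (γ.1 1) z‖ := by
    have h := norm_add_le (crossForm γ (conj ϱ) z) (conj ϱ * rowForm (γ.1 1) z)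
    rwa [crossForm, sub_add_cancel, norm_mul, norm_conj] at h
  rw [div_mul_eq_mul_div, div_le_iff₀ (by positivity)]
  fin_cases i
  · calc ϱ.im * ‖rowForm (γ.1 0) z‖ ≤ ϱ.im * (D + ‖ϱ‖ * ‖rowForm (γ.1 1) z‖) := by gcongr
      _ = ϱ.im * D + ‖ϱ‖ * (ϱ.im * ‖rowForm (γ.1 1) z‖) := by ring
      _ ≤ ϱ.im * D + ‖ϱ‖ * D := by gcongr
      _ ≤ D * (1 + ϱ.im + ‖ϱ‖) := by linarith [norm_nonneg (crossForm γ (conj ϱ) z)]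
  · calc ϱ.im * ‖rowForm (γ.1 1) z‖ ≤ D := hv
      _ ≤ D * (1 + ϱ.im + ‖ϱ‖) :=
        le_mul_of_one_le_right (norm_nonneg _) (by linarith [norm_nonneg ϱ])

lemma exists_mul_norm_le_norm_crossForm {ϱ : ℂ} (hϱ : ϱ ∈ UH) (A : ℝ) {B : ℝ} (hB : 0 < B) :
    ∃ m > 0, ∀ z ∈ UpperHalfPlane.verticalStrip A B, ∀ γ : SL2Z,
      m * ‖γ.1‖ ≤ ‖crossForm γ (conj ϱ) z‖ := by
  obtain ⟨c, hc, hle⟩ := exists_mul_norm_rowForm_le hϱ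
  set r := EisensteinSeries.r ⟨⟨A, B⟩, hB⟩
  have hcr : 0 < c * r := mul_pos hc (EisensteinSeries.r_pos _)
  refine ⟨c * r, hcr, fun z hz γ ↦ ?_⟩
  rw [← le_div_iff₀' hcr]
  refine (pi_norm_le_iff_of_nonneg (by positivity)).2 fun i ↦ ?_
  rw [le_div_iff₀' hcr, mul_assoc]
  calc c * (r * ‖γ.1 i‖) ≤ c * (EisensteinSeries.r z * ‖γ.1 i‖) := by
        gcongr
        exact EisensteinSeries.r_lower_bound_on_verticalStrip z hB hz
    _ ≤ c * ‖rowForm (γ.1 i) z‖ := by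
        gcongr
        exact EisensteinSeries.r_mul_max_le z (γ.row_ne_zero i)
    _ ≤ ‖crossForm γ (conj ϱ) z‖ := hle z z.im_pos γ i

lemma exists_mul_im_le_norm_crossForm {ϱ : ℂ} (hϱ : ϱ ∈ UH) :
    ∃ c > 0, ∀ z ∈ UH, ∀ γ : SL2Z, c * z.im ≤ ‖crossForm γ (conj ϱ) z‖ := by
  obtain ⟨c, hc, hle⟩ := exists_mul_norm_rowForm_le hϱ
  refine ⟨c, hc, fun z hz γ ↦ ?_⟩
  obtain ⟨i, hi⟩ : ∃ i, γ.1 i 0 ≠ 0 := by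
    by_contra! h
    simpa [h] using SL2Z_det γ
  refine le_trans ?_ (hle z hz γ i)
  gcongr
  exact im_le_norm_rowForm hi hz

lemma etaTerm_eq_div_crossForm_pow (k : ℕ) (ϱ : ℂ) {z : ℂ} (hz : z ∈ UH) (γ : SL2Z) :
    etaTerm k ϱ z γ = ((ϱ - conj ϱ) / (crossForm γ ϱ z * crossForm γ (conj ϱ) z)) ^ k := by
  have hv := rowForm_ne_zero (γ.row_ne_zero 1) hz
  have hjac : rowForm (γ.1 1) z ^ (-(2 * k : ℤ)) = (rowForm (γ.1 1) z ^ 2)⁻¹ ^ k := by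
    rw [zpow_neg, zpow_mul, zpow_natCast, zpow_ofNat, inv_pow]
  rw [etaTerm_eq_mul_rowForm_zpow, hjac, moeb_sub_eq_crossForm_div γ _ hz,
    moeb_sub_eq_crossForm_div γ _ hz, zpow_neg, zpow_natCast, ← inv_pow, ← mul_pow]
  field_simp

lemma norm_etaTerm_le (k : ℕ) {ϱ z : ℂ} (hϱ : ϱ ∈ UH) (hz : z ∈ UH) {γ : SL2Z} {D : ℝ} (hD : 0 < D)
    (hγ : D ≤ ‖crossForm γ (conj ϱ) z‖)
    (hfar : 8 * ϱ.im * z.im ≤ ‖crossForm γ (conj ϱ) z‖ ^ 2) :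
    ‖etaTerm k ϱ z γ‖ ≤ (4 * ϱ.im / D ^ 2) ^ k := by
  have hϱ' : 0 < ϱ.im := hϱ
  have hhalf : ‖crossForm γ (conj ϱ) z‖ / 2 ≤ ‖crossForm γ ϱ z‖ := by
    refine le_of_sq_le_sq ?_ (norm_nonneg _)
    rw [div_pow]
    linarith [norm_crossForm_conj_sq γ ϱ z, sq_nonneg (‖crossForm γ (conj ϱ) z‖)]
  rw [etaTerm_eq_div_crossForm_pow k ϱ hz, norm_pow, norm_div, norm_mul, norm_sub_conj hϱ]
  refine pow_le_pow_left₀ (by positivity) ?_ k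
  calc 2 * ϱ.im / (‖crossForm γ ϱ z‖ * ‖crossForm γ (conj ϱ) z‖)
      ≤ 2 * ϱ.im / (D / 2 * D) := by gcongr; linarith
    _ = 4 * ϱ.im / D ^ 2 := by field_simp; norm_num

lemma moeb_ne_of_le_norm_crossForm_sq {ϱ z : ℂ} (hϱ : ϱ ∈ UH) (hz : z ∈ UH) {γ : SL2Z}
    (hfar : 8 * ϱ.im * z.im ≤ ‖crossForm γ (conj ϱ) z‖ ^ 2) : moeb γ z ≠ ϱ := by
  have hϱz : 0 < ϱ.im * z.im := mul_pos hϱ hz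
  intro h
  have h0 := norm_crossForm_conj_sq γ ϱ z
  rw [(crossForm_eq_zero_iff hz).2 h, norm_zero] at h0
  linarith

lemma summable_div_norm_sq_pow {k : ℕ} (hk : 2 ≤ k) (a m : ℝ) :
    Summable fun γ : SL2Z ↦ (a / (m * ‖γ.1‖) ^ 2) ^ k := by
  refine ((summable_SL2Z_inv_norm_pow (by lia : 3 < 2 * k)).mul_left ((a / m ^ 2) ^ k)).congr
    fun γ ↦ ?_
  rw [pow_mul, ← mul_pow, inv_pow, mul_pow m, div_mul_eq_div_div, div_eq_mul_inv (a / m ^ 2)]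

lemma exists_mul_norm_le_norm_crossForm_of_isCompact {ϱ : ℂ} (hϱ : ϱ ∈ UH) {K : Set ℂ}
    (hK : IsCompact K) (hKU : K ⊆ UH) :
    ∃ m > 0, ∀ z ∈ K, ∀ γ : SL2Z, m * ‖γ.1‖ ≤ ‖crossForm γ (conj ϱ) z‖ := by
  obtain ⟨B, hB, hBK⟩ := hK.exists_forall_le' continuous_im.continuousOn hKU
  obtain ⟨A, hA⟩ := hK.exists_bound_of_continuousOn continuous_re.continuousOn
  obtain ⟨m, hm, hle⟩ := exists_mul_norm_le_norm_crossForm hϱ A hB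
  exact ⟨m, hm, fun z hz γ ↦ hle ⟨z, hKU hz⟩ ⟨hA z hz, hBK z hz⟩ γ⟩

lemma eventually_cofinite_le_norm_crossForm_sq {ϱ : ℂ} (hϱ : ϱ ∈ UH) {K : Set ℂ}
    (hK : IsCompact K) (hKU : K ⊆ UH) : ∀ᶠ γ : SL2Z in cofinite, ∀ z ∈ K,
      8 * ϱ.im * z.im ≤ ‖crossForm γ (conj ϱ) z‖ ^ 2 := by
  obtain ⟨Y, hY⟩ := hK.exists_bound_of_continuousOn continuous_im.continuousOn
  obtain ⟨m, hm, hle⟩ := exists_mul_norm_le_norm_crossForm_of_isCompact hϱ hK hKU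
  have hlarge : ∀ᶠ γ : SL2Z in cofinite, 8 * ϱ.im * Y ≤ (m * ‖γ.1‖) ^ 2 :=
    ((tendsto_pow_atTop two_ne_zero).comp
      (tendsto_SL2Z_norm_cofinite_atTop.const_mul_atTop hm)).eventually_ge_atTop _
  filter_upwards [hlarge] with γ hγ z hz
  have hϱ' : 0 < ϱ.im := hϱ
  calc 8 * ϱ.im * z.im ≤ 8 * ϱ.im * Y := by
        gcongr
        exact (le_abs_self _).trans (hY z hz)
    _ ≤ (m * ‖γ.1‖) ^ 2 := hγ
    _ ≤ ‖crossForm γ (conj ϱ) z‖ ^ 2 := by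
        gcongr
        exact hle z hz γ

lemma exists_summable_norm_etaTerm_le {k : ℕ} (hk : 2 ≤ k) {ϱ : ℂ} (hϱ : ϱ ∈ UH) {K : Set ℂ}
    (hK : IsCompact K) (hKU : K ⊆ UH) :
    ∃ u : SL2Z → ℝ, Summable u ∧ ∀ᶠ γ in cofinite, ∀ z ∈ K, ‖etaTerm k ϱ z γ‖ ≤ u γ := by
  obtain ⟨m, hm, hle⟩ := exists_mul_norm_le_norm_crossForm_of_isCompact hϱ hK hKU
  refine ⟨_, summable_div_norm_sq_pow hk (4 * ϱ.im) m, ?_⟩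
  filter_upwards [eventually_cofinite_le_norm_crossForm_sq hϱ hK hKU] with γ hfar z hz
  exact norm_etaTerm_le k hϱ (hKU hz) (mul_pos hm (SL2Z_norm_pos γ)) (hle z hz γ) (hfar z hz)

lemma summable_etaTerm {k : ℕ} (hk : 2 ≤ k) {ϱ z : ℂ} (hϱ : ϱ ∈ UH) (hz : z ∈ UH) :
    Summable (etaTerm k ϱ z) := by
  obtain ⟨u, hu, hle⟩ :=
    exists_summable_norm_etaTerm_le hk hϱ isCompact_singleton (singleton_subset_iff.2 hz)
  exact hu.of_norm_bounded_eventually (hle.mono fun γ h ↦ h z rfl)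

/-- The points `z` of `ℍ` with `γz ≠ ϱ` for all `γ ∈ T`, at which no term of the Poincaré series
indexed by `T` has a pole. For `T = univ` it is the complement of the orbit of `ϱ`, and for
`T = {1, -1}ᶜ` it contains `ϱ` when the stabilizer is trivial. -/
def regularSet (ϱ : ℂ) (T : Set SL2Z) : Set ℂ := {z ∈ UH | ∀ γ ∈ T, moeb γ z ≠ ϱ}

lemma regularSet_subset_UH (ϱ : ℂ) (T : Set SL2Z) : regularSet ϱ T ⊆ UH := sep_subset _ _

lemma isOpen_regularSet {ϱ : ℂ} (hϱ : ϱ ∈ UH) (T : Set SL2Z) : IsOpen (regularSet ϱ T) := by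
  refine isOpen_iff_mem_nhds.2 fun z₀ hz₀ ↦ ?_
  obtain ⟨K, ⟨hK₀, hK⟩, hKU⟩ := (compact_basis_nhds z₀).mem_iff.1 (isOpen_UH.mem_nhds hz₀.1)
  have hfinite : {γ | ¬ ∀ z ∈ K, moeb γ z ≠ ϱ}.Finite := by
    refine eventually_cofinite.1 ?_
    filter_upwards [eventually_cofinite_le_norm_crossForm_sq hϱ hK hKU] with γ hγ z hz
    exact moeb_ne_of_le_norm_crossForm_sq hϱ (hKU hz) (hγ z hz)
  have hnear : ∀ᶠ z in 𝓝 z₀, ∀ γ ∈ {γ | ¬ ∀ z ∈ K, moeb γ z ≠ ϱ}, γ ∈ T →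
      crossForm γ ϱ z ≠ 0 := by
    refine (eventually_all_finite hfinite).2 fun γ _ ↦ eventually_imp_distrib_left.2 fun hγ ↦ ?_
    exact (differentiable_crossForm γ ϱ).continuous.continuousAt.eventually_ne
      ((crossForm_eq_zero_iff hz₀.1).not.2 (hz₀.2 γ hγ))
  filter_upwards [hK₀, hnear] with z hz hz'
  refine ⟨hKU hz, fun γ hγ ↦ ?_⟩
  by_cases hγK : ∀ z ∈ K, moeb γ z ≠ ϱ
  · exact hγK z hz
  · exact (crossForm_eq_zero_iff (hKU hz)).not.1 (hz' γ hγK hγ)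

lemma differentiableAt_etaTerm (k : ℕ) {ϱ z : ℂ} (hϱ : ϱ ∈ UH) (hz : z ∈ UH) {γ : SL2Z}
    (hγ : moeb γ z ≠ ϱ) : DifferentiableAt ℂ (etaTerm k ϱ · γ) z := by
  have heq : (etaTerm k ϱ · γ) =ᶠ[𝓝 z]
      fun z ↦ ((ϱ - conj ϱ) / (crossForm γ ϱ z * crossForm γ (conj ϱ) z)) ^ k := by
    filter_upwards [isOpen_UH.mem_nhds hz] with w hw using etaTerm_eq_div_crossForm_pow k ϱ hw γ
  have hconj : crossForm γ (conj ϱ) z ≠ 0 := fun h ↦ by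
    have hϱz : 0 < ϱ.im * z.im := mul_pos hϱ hz
    have := norm_crossForm_conj_sq γ ϱ z
    rw [h, norm_zero] at this
    linarith [sq_nonneg ‖crossForm γ ϱ z‖]
  have hne := mul_ne_zero ((crossForm_eq_zero_iff hz).not.2 hγ) hconj
  have hprod := (differentiable_crossForm γ ϱ z).fun_mul (differentiable_crossForm γ (conj ϱ) z)
  exact heq.differentiableAt_iff.2 (((differentiableAt_const _).fun_div hprod hne).fun_pow k)

lemma differentiableOn_tsum_etaTerm {k : ℕ} (hk : 2 ≤ k) {ϱ : ℂ} (hϱ : ϱ ∈ UH) (T : Set SL2Z) :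
    DifferentiableOn ℂ (fun z ↦ ∑' γ : T, etaTerm k ϱ z γ) (regularSet ϱ T) := by
  have hopen := isOpen_regularSet hϱ T
  have hsum : SummableLocallyUniformlyOn (fun (γ : T) z ↦ etaTerm k ϱ z γ) (regularSet ϱ T) := by
    refine .of_locally_bounded_eventually hopen fun K hKT hK ↦ ?_
    obtain ⟨u, hu, hle⟩ :=
      exists_summable_norm_etaTerm_le hk hϱ hK (hKT.trans (regularSet_subset_UH ϱ T))
    exact ⟨u ∘ (↑), hu.subtype T, Subtype.val_injective.tendsto_cofinite.eventually hle⟩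
  exact hsum.differentiableOn hopen
    fun {γ z} hz ↦ differentiableAt_etaTerm k hϱ hz.1 (hz.2 γ γ.2)

lemma moeb_coe (γ : SL2Z) (z : UpperHalfPlane) : moeb γ z = ↑(γ • z) :=
  (UpperHalfPlane.coe_specialLinearGroup_apply γ z).symm

lemma moeb_inv_moeb (γ : SL2Z) {z : ℂ} (hz : z ∈ UH) : moeb γ⁻¹ (moeb γ z) = z := by
  lift z to UpperHalfPlane using hz
  rw [moeb_coe, moeb_coe, inv_smul_smul]

lemma UH_diff_orbit_subset_regularSet (ϱ : ℂ) : UH \ orbit ϱ ⊆ regularSet ϱ univ :=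
  fun z hz ↦ ⟨hz.1, fun γ _ h ↦ hz.2 ⟨γ⁻¹, by rw [← h, moeb_inv_moeb γ hz.1]⟩⟩

lemma etaTerm_one (k : ℕ) (ϱ z : ℂ) : etaTerm k ϱ z 1 = polePart k ϱ z := by
  simp [etaTerm, polePart, moeb]

lemma etaTerm_neg (k : ℕ) (ϱ z : ℂ) (γ : SL2Z) : etaTerm k ϱ z (-γ) = etaTerm k ϱ z γ := by
  have hmoeb : moeb (-γ) z = moeb γ z := by simp [moeb, ← neg_add_rev, neg_div_neg_eq, add_comm]
  have hev : Even (-(2 * k : ℤ)) := by simp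
  simp [etaTerm, hmoeb, ← neg_add_rev, add_comm, hev.neg_zpow]

lemma etaP_eq_polePart_add_tsum {k : ℕ} (hk : 2 ≤ k) {ϱ z : ℂ} (hϱ : ϱ ∈ UH) (hz : z ∈ UH) :
    etaP k ϱ z =
      polePart k ϱ z + 1 / 2 * ∑' γ : ({1, -1}ᶜ : Set SL2Z), etaTerm k ϱ z γ := by
  have hne : (1 : SL2Z) ≠ -1 := by decide
  have hsplit := (summable_etaTerm hk hϱ hz).sum_add_tsum_compl (s := {1, -1})
  rw [Finset.sum_pair hne, etaTerm_neg, etaTerm_one, Finset.coe_pair] at hsplit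
  rw [etaP, ← hsplit]
  ring

lemma rowForm_mul_T_zpow (γ : SL2Z) (n : ℤ) (i : Fin 2) (z : ℂ) :
    rowForm ((γ * ModularGroup.T ^ n).1 i) z = rowForm (γ.1 i) (z + n) := by
  have hrow₀ : (γ * ModularGroup.T ^ n).1 i 0 = γ.1 i 0 := by
    simp [ModularGroup.coe_T_zpow, Matrix.mul_apply, Fin.sum_univ_two]
  have hrow₁ : (γ * ModularGroup.T ^ n).1 i 1 = γ.1 i 0 * n + γ.1 i 1 := by
    simp [ModularGroup.coe_T_zpow, Matrix.mul_apply, Fin.sum_univ_two]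
  rw [rowForm, rowForm, hrow₀, hrow₁, Int.cast_add, Int.cast_mul]
  ring

lemma etaTerm_mul_T_zpow (k : ℕ) (ϱ z : ℂ) (γ : SL2Z) (n : ℤ) :
    etaTerm k ϱ z (γ * ModularGroup.T ^ n) = etaTerm k ϱ (z + n) γ := by
  simp only [etaTerm_eq_mul_rowForm_zpow, moeb_eq_rowForm_div, rowForm_mul_T_zpow]

lemma etaP_add_intCast (k : ℕ) (ϱ z : ℂ) (n : ℤ) : etaP k ϱ (z + n) = etaP k ϱ z := by
  simp only [etaP, ← etaTerm_mul_T_zpow]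
  exact congrArg (1 / 2 * ·) ((Equiv.mulRight (ModularGroup.T ^ n)).tsum_eq (etaTerm k ϱ z))

lemma eventually_comap_im_le_norm_crossForm_sq {ϱ : ℂ} (hϱ : ϱ ∈ UH) :
    ∀ᶠ z in comap im atTop, ∀ γ : SL2Z, 8 * ϱ.im * z.im ≤ ‖crossForm γ (conj ϱ) z‖ ^ 2 := by
  obtain ⟨c, hc, hle⟩ := exists_mul_im_le_norm_crossForm hϱ
  have hlarge : ∀ᶠ y : ℝ in atTop, 8 * ϱ.im ≤ c ^ 2 * y :=
    (tendsto_id.const_mul_atTop (by positivity)).eventually_ge_atTop _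
  filter_upwards [(hlarge.and (eventually_gt_atTop 0)).comap im] with z ⟨hz, (hzU : z ∈ UH)⟩ γ
  have hz0 : 0 < z.im := hzU
  calc 8 * ϱ.im * z.im ≤ c ^ 2 * z.im * z.im := by gcongr
    _ = (c * z.im) ^ 2 := by ring
    _ ≤ ‖crossForm γ (conj ϱ) z‖ ^ 2 := by gcongr; exact hle z hzU γ

lemma tendsto_etaTerm_comap_im_atTop {k : ℕ} (hk : k ≠ 0) {ϱ : ℂ} (hϱ : ϱ ∈ UH) (γ : SL2Z) :
    Tendsto (etaTerm k ϱ · γ) (comap im atTop) (𝓝 0) := by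
  obtain ⟨c, hc, hle⟩ := exists_mul_im_le_norm_crossForm hϱ
  have hbound : Tendsto (fun y : ℝ ↦ (4 * ϱ.im / (c * y) ^ 2) ^ k) atTop (𝓝 0) := by
    have := ((tendsto_pow_atTop two_ne_zero).comp
      (tendsto_id.const_mul_atTop hc)).const_div_atTop (4 * ϱ.im)
    simpa [hk] using this.pow k
  refine squeeze_zero_norm' ?_ (hbound.comp tendsto_comap)
  filter_upwards [(eventually_gt_atTop 0).comap im, eventually_comap_im_le_norm_crossForm_sq hϱ]
    with z (hz : z ∈ UH) hfar
  exact norm_etaTerm_le k hϱ hz (mul_pos hc hz) (hle z hz γ) (hfar γ)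

lemma tendsto_etaP_comap_im_atTop_inf_principal {k : ℕ} (hk : 2 ≤ k) {ϱ : ℂ} (hϱ : ϱ ∈ UH)
    (A : ℝ) : Tendsto (etaP k ϱ) (comap im atTop ⊓ 𝓟 {z | |z.re| ≤ A}) (𝓝 0) := by
  obtain ⟨m, hm, hle⟩ := exists_mul_norm_le_norm_crossForm hϱ A one_pos
  have hdom : ∀ᶠ z in comap im atTop ⊓ 𝓟 {z | |z.re| ≤ A}, ∀ γ : SL2Z,
      ‖etaTerm k ϱ z γ‖ ≤ (4 * ϱ.im / (m * ‖γ.1‖) ^ 2) ^ k := by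
    rw [eventually_inf_principal]
    filter_upwards [(eventually_ge_atTop 1).comap im, eventually_comap_im_le_norm_crossForm_sq hϱ]
      with z hz hfar hzA γ
    have hzU : z ∈ UH := one_pos.trans_le hz
    exact norm_etaTerm_le k hϱ hzU (mul_pos hm (SL2Z_norm_pos γ)) (hle ⟨z, hzU⟩ ⟨hzA, hz⟩ γ)
      (hfar γ)
  have hlim := tendsto_tsum_of_dominated_convergence (summable_div_norm_sq_pow hk (4 * ϱ.im) m)
    (fun γ ↦ (tendsto_etaTerm_comap_im_atTop (by lia) hϱ γ).mono_left inf_le_left) hdom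
  have h0 := hlim.const_mul (1 / 2)
  rwa [tsum_zero, mul_zero] at h0

lemma tendsto_etaP_comap_im_atTop {k : ℕ} (hk : 2 ≤ k) {ϱ : ℂ} (hϱ : ϱ ∈ UH) :
    Tendsto (etaP k ϱ) (comap im atTop) (𝓝 0) := by
  have hshift : Tendsto (fun z : ℂ ↦ z + (-⌊z.re⌋ : ℤ)) (comap im atTop)
      (comap im atTop ⊓ 𝓟 {z | |z.re| ≤ 1}) := by
    refine tendsto_inf.2 ⟨tendsto_comap_iff.2 ?_, tendsto_principal.2 (.of_forall fun z ↦ ?_)⟩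
    · simpa [Function.comp_def] using tendsto_comap
    · simpa [← sub_eq_add_neg, abs_of_nonneg] using (Int.fract_lt_one z.re).le
  exact ((tendsto_etaP_comap_im_atTop_inf_principal hk hϱ 1).comp hshift).congr
    fun z ↦ etaP_add_intCast k ϱ z _

/-- For `k ≥ 2` and `ϱ ∈ ℍ`: (i) `η_{k,ϱ}` is holomorphic on `ℍ ∖ SL₂(ℤ)ϱ`;
(ii) if `ϱ` has trivial stabilizer in `PSL₂(ℤ)`, then
`z ↦ η_{k,ϱ}(z) − ((z−ϱ)(z−conj ϱ)/(ϱ−conj ϱ))^(−k)` extends holomorphically to a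
neighborhood of `ϱ`; (iii) `η_{k,ϱ}(z) → 0` as `Im z → ∞`, uniformly in `Re z`. -/
theorem etaP_meromorphic_vanishing_at_cusp (k : ℕ) (hk : 2 ≤ k) (ϱ : ℂ) (hϱ : ϱ ∈ UH) :
    DifferentiableOn ℂ (etaP k ϱ) (UH \ orbit ϱ) ∧
    ((∀ γ : SL2Z, moeb γ ϱ = ϱ → γ = 1 ∨ γ = -1) →
      ∃ ε > 0, Metric.ball ϱ ε ⊆ UH ∧ ∃ g : ℂ → ℂ,
        DifferentiableOn ℂ g (Metric.ball ϱ ε) ∧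
        ∀ z ∈ Metric.ball ϱ ε \ {ϱ}, g z = etaP k ϱ z - polePart k ϱ z) ∧
    (∀ δ > 0, ∃ T : ℝ, ∀ z ∈ UH \ orbit ϱ, T < z.im → ‖etaP k ϱ z‖ < δ) := by
  refine ⟨?_, fun hstab ↦ ?_, fun δ hδ ↦ ?_⟩
  · have hdiff := (differentiableOn_tsum_etaTerm hk hϱ univ).const_mul (1 / 2)
    simp only [tsum_univ (etaTerm k ϱ _)] at hdiff
    exact hdiff.mono (UH_diff_orbit_subset_regularSet ϱ)
  · have hreg : ϱ ∈ regularSet ϱ {1, -1}ᶜ := ⟨hϱ, fun γ hγ h ↦ hγ (hstab γ h)⟩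
    obtain ⟨ε, hε, hball⟩ := Metric.isOpen_iff.1 (isOpen_regularSet hϱ _) ϱ hreg
    have hballU := hball.trans (regularSet_subset_UH ϱ _)
    refine ⟨ε, hε, hballU, _,
      ((differentiableOn_tsum_etaTerm hk hϱ _).const_mul (1 / 2)).mono hball, fun z hz ↦ ?_⟩
    rw [etaP_eq_polePart_add_tsum hk hϱ (hballU hz.1), add_sub_cancel_left]
  · have hsmall := (tendsto_etaP_comap_im_atTop hk hϱ).norm.eventually_lt_const (by simpa using hδ)
    obtain ⟨T, -, hT⟩ := (atTop_basis_Ioi.comap im).eventually_iff.1 hsmall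
    exact ⟨T, fun z _ hz ↦ hT hz⟩
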